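/- arXiv:1508.02732 — 6 statements merged into one kernel-verified Lean document; each statement's English description precedes it below -/
import Mathlib

section
/- (Gordon decomposition, flat spacetime.) Let Ψ : ℝ⁴ → ℂ⁴ be twice continuously differentiable and satisfy the flat-spacetime Dirac equation iℏ ∑_{μ=0}^{3} γ^μ ∂_μΨ = mΨ. Define σ^{μν} := (i/2)(γ^μγ^ν − γ^νγ^μ), the polarization current j_pol^μ := (ℏ/(2m)) ∑_{ν=0}^{3} ∂_ν(Ψ̄ σ^{μν} Ψ), and the convection current j_con^μ := (ℏ/(2mi)) ((∂^μΨ̄)Ψ − Ψ̄(∂^μΨ)). Then for each μ = 0,1,2,3: (i) Ψ̄γ^μΨ = j_pol^μ + j_con^μ; moreover (ii) ∑_{μ=0}^{3} ∂_μ j_pol^μ = 0 and (iii) ∑_{μ=0}^{3} ∂_μ j_con^μ = 0, i.e. the Dirac current decomposes into a polarization current and a convection current which are separately conserved. -/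
open Matrix

noncomputable section

/-- The standard Dirac gamma matrices. -/
def diracGamma : Fin 4 → Matrix (Fin 4) (Fin 4) ℂ
  | 0 => !![1, 0, 0, 0; 0, 1, 0, 0; 0, 0, -1, 0; 0, 0, 0, -1]
  | 1 => !![0, 0, 0, 1; 0, 0, 1, 0; 0, -1, 0, 0; -1, 0, 0, 0]
  | 2 => !![0, 0, 0, -Complex.I; 0, 0, Complex.I, 0;
            0, Complex.I, 0, 0; -Complex.I, 0, 0, 0]
  | 3 => !![0, 0, 1, 0; 0, 0, 0, -1; -1, 0, 0, 0; 0, 1, 0, 0]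

/-- Partial derivative in the μ-th coordinate direction of ℝ⁴. -/
def pd {E : Type*} [NormedAddCommGroup E] [NormedSpace ℝ E]
    (μ : Fin 4) (f : (Fin 4 → ℝ) → E) (x : Fin 4 → ℝ) : E :=
  fderiv ℝ f x (Pi.single μ 1)

/-- The Dirac adjoint Ψ̄ := Ψ†γ⁰, a row vector. -/
def diracAdjoint (Ψ : (Fin 4 → ℝ) → (Fin 4 → ℂ)) (x : Fin 4 → ℝ) : Fin 4 → ℂ :=
  Matrix.vecMul (fun i => star (Ψ x i)) (diracGamma 0)

/-- σ^{μν} := (i/2)(γ^μγ^ν − γ^νγ^μ). -/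
def diracSigma (μ ν : Fin 4) : Matrix (Fin 4) (Fin 4) ℂ :=
  (Complex.I / 2) • (diracGamma μ * diracGamma ν - diracGamma ν * diracGamma μ)

/-- Minkowski metric η = diag(1,−1,−1,−1). -/
def minkEta (μ ν : Fin 4) : ℂ :=
  if μ = ν then (if μ = 0 then 1 else -1) else 0

/-- Polarization current j_pol^μ := (ℏ/(2m)) ∑_ν ∂_ν(Ψ̄ σ^{μν} Ψ). -/
def jPolar (ℏ m : ℝ) (Ψ : (Fin 4 → ℝ) → (Fin 4 → ℂ)) (μ : Fin 4)
    (x : Fin 4 → ℝ) : ℂ :=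
  ((ℏ : ℂ) / (2 * m)) *
    ∑ ν : Fin 4, pd ν (fun y => diracAdjoint Ψ y ⬝ᵥ (diracSigma μ ν).mulVec (Ψ y)) x

/-- Convection current j_con^μ := (ℏ/(2mi)) ((∂^μΨ̄)Ψ − Ψ̄(∂^μΨ)),
with ∂^μ := η^{μμ}∂_μ (no summation). -/
def jCon (ℏ m : ℝ) (Ψ : (Fin 4 → ℝ) → (Fin 4 → ℂ)) (μ : Fin 4)
    (x : Fin 4 → ℝ) : ℂ :=
  ((ℏ : ℂ) / (2 * m * Complex.I)) * (minkEta μ μ *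
    (pd μ (diracAdjoint Ψ) x ⬝ᵥ Ψ x - diracAdjoint Ψ x ⬝ᵥ pd μ Ψ x))

lemma gd_pd_comp (Ψ : (Fin 4 → ℝ) → (Fin 4 → ℂ)) (x : Fin 4 → ℝ)
    (h : DifferentiableAt ℝ Ψ x) (μ i : Fin 4) :
    pd μ (fun y => Ψ y i) x = pd μ Ψ x i := by
  unfold pd
  rw [fderiv_apply h]
  rfl

lemma gd_pd_star (f : (Fin 4 → ℝ) → ℂ) (x : Fin 4 → ℝ) (μ : Fin 4) :
    pd μ (fun y => star (f y)) x = star (pd μ f x) := by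
  unfold pd
  rw [fderiv_star]
  rfl

lemma gd_pd_mul (f g : (Fin 4 → ℝ) → ℂ) (x : Fin 4 → ℝ) (hf : DifferentiableAt ℝ f x)
    (hg : DifferentiableAt ℝ g x) (μ : Fin 4) :
    pd μ (fun y => f y * g y) x = pd μ f x * g x + f x * pd μ g x := by
  unfold pd
  rw [fderiv_fun_mul hf hg]
  simp
  ring

lemma gd_pd_sum (f : Fin 4 → (Fin 4 → ℝ) → ℂ) (x : Fin 4 → ℝ)
    (hf : ∀ i, DifferentiableAt ℝ (f i) x) (μ : Fin 4) :
    pd μ (fun y => ∑ i, f i y) x = ∑ i, pd μ (f i) x := by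
  unfold pd
  rw [fderiv_fun_sum (fun i _ => hf i)]
  simp

lemma gd_pd_const_mul (c : ℂ) (f : (Fin 4 → ℝ) → ℂ) (x : Fin 4 → ℝ)
    (hf : DifferentiableAt ℝ f x) (μ : Fin 4) :
    pd μ (fun y => c * f y) x = c * pd μ f x := by
  unfold pd
  rw [fderiv_const_mul hf]
  simp

lemma gd_pd_sub (f g : (Fin 4 → ℝ) → ℂ) (x : Fin 4 → ℝ) (hf : DifferentiableAt ℝ f x)
    (hg : DifferentiableAt ℝ g x) (μ : Fin 4) :
    pd μ (fun y => f y - g y) x = pd μ f x - pd μ g x := by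
  unfold pd
  rw [fderiv_fun_sub hf hg]
  simp

lemma gd_pd_diff (f : (Fin 4 → ℝ) → ℂ) (hf : ContDiff ℝ 2 f) (μ : Fin 4) :
    Differentiable ℝ (pd μ f) := by
  have h : Differentiable ℝ (fderiv ℝ f) :=
    (hf.fderiv_right (m := 1) (by norm_num)).differentiable (by norm_num)
  unfold pd
  fun_prop

lemma gd_pd_symm (f : (Fin 4 → ℝ) → ℂ) (hf : ContDiff ℝ 2 f) (μ ν : Fin 4) (x : Fin 4 → ℝ) :
    pd μ (pd ν f) x = pd ν (pd μ f) x := by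
  have h : Differentiable ℝ (fderiv ℝ f) :=
    (hf.fderiv_right (m := 1) (by norm_num)).differentiable (by norm_num)
  have key : ∀ a b : Fin 4, pd a (pd b f) x
      = fderiv ℝ (fderiv ℝ f) x (Pi.single a 1) (Pi.single b 1) := by
    intro a b
    unfold pd
    rw [fderiv_clm_apply (h x) (by fun_prop)]
    simp
  rw [key, key]
  have := (hf.contDiffAt (x := x)).isSymmSndFDerivAt (by simp)
  exact this _ _

lemma gd_adj_contDiff (Ψ : (Fin 4 → ℝ) → (Fin 4 → ℂ)) (hΨ : ContDiff ℝ 2 Ψ) :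
    ContDiff ℝ 2 (diracAdjoint Ψ) := by
  rw [contDiff_pi] at hΨ ⊢
  intro i
  unfold diracAdjoint Matrix.vecMul dotProduct
  refine ContDiff.sum fun j _ => ?_
  refine ContDiff.mul ?_ contDiff_const
  exact (starL' ℝ (A := ℂ)).contDiff.comp (hΨ j)

lemma gd_bil_contDiff (a b : (Fin 4 → ℝ) → (Fin 4 → ℂ)) (ha : ContDiff ℝ 2 a)
    (hb : ContDiff ℝ 2 b) (M : Matrix (Fin 4) (Fin 4) ℂ) :
    ContDiff ℝ 2 (fun y => a y ⬝ᵥ M.mulVec (b y)) := by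
  rw [contDiff_pi] at ha hb
  unfold Matrix.mulVec dotProduct
  refine ContDiff.sum fun j _ => (ha j).mul (ContDiff.sum fun k _ => ?_)
  exact contDiff_const.mul (hb k)

lemma gd_pd_bil (a b : (Fin 4 → ℝ) → (Fin 4 → ℂ)) (ha : ContDiff ℝ 2 a)
    (hb : ContDiff ℝ 2 b) (M : Matrix (Fin 4) (Fin 4) ℂ) (μ : Fin 4) (x : Fin 4 → ℝ) :
    pd μ (fun y => a y ⬝ᵥ M.mulVec (b y)) x
      = pd μ a x ⬝ᵥ M.mulVec (b x) + a x ⬝ᵥ M.mulVec (pd μ b x) := by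
  have hda : Differentiable ℝ a := ha.differentiable (by norm_num)
  have hdb : Differentiable ℝ b := hb.differentiable (by norm_num)
  have h1 : ∀ i, DifferentiableAt ℝ (fun y => a y i) x := fun i => by fun_prop
  have h2 : ∀ i, DifferentiableAt ℝ (fun y => b y i) x := fun i => by fun_prop
  unfold Matrix.mulVec dotProduct
  rw [gd_pd_sum _ _ (fun i => by fun_prop), ← Finset.sum_add_distrib]
  refine Finset.sum_congr rfl fun i _ => ?_
  rw [gd_pd_mul _ _ _ (h1 i) (by fun_prop), gd_pd_sum _ _ (fun i => by fun_prop),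
    gd_pd_comp a x (hda x)]
  congr 2
  refine Finset.sum_congr rfl fun j _ => ?_
  rw [gd_pd_const_mul _ _ _ (h2 j), gd_pd_comp b x (hdb x)]

lemma gd_pd_adj (Ψ : (Fin 4 → ℝ) → (Fin 4 → ℂ)) (hΨ : ContDiff ℝ 2 Ψ) (μ : Fin 4)
    (x : Fin 4 → ℝ) :
    pd μ (diracAdjoint Ψ) x = Matrix.vecMul (star (pd μ Ψ x)) (diracGamma 0) := by
  have hda : Differentiable ℝ Ψ := hΨ.differentiable (by norm_num)
  have h1 : ∀ i, DifferentiableAt ℝ (fun y => Ψ y i) x := fun i => by fun_prop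
  have h2 : ∀ i, DifferentiableAt ℝ (fun y => star (Ψ y i)) x := fun i => (h1 i).star
  ext j
  rw [← gd_pd_comp _ x ((gd_adj_contDiff Ψ hΨ).differentiable (by norm_num) x)]
  change pd μ (fun y => ∑ i, star (Ψ y i) * diracGamma 0 i j) x
    = ∑ i, star (pd μ Ψ x i) * diracGamma 0 i j
  rw [gd_pd_sum (fun i y => star (Ψ y i) * diracGamma 0 i j) _ (fun i => (h2 i).mul (differentiableAt_const _))]
  refine Finset.sum_congr rfl fun i _ => ?_
  rw [gd_pd_mul _ _ _ (h2 i) (differentiableAt_const _), gd_pd_star, gd_pd_comp Ψ x (hda x)]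
  simp [pd]

set_option maxHeartbeats 4000000 in
lemma gd_clifford (μ ν : Fin 4) :
    diracGamma μ * diracGamma ν + diracGamma ν * diracGamma μ
      = (2 * minkEta μ ν) • (1 : Matrix (Fin 4) (Fin 4) ℂ) := by
  fin_cases μ <;> fin_cases ν <;> ext i j <;> fin_cases i <;> fin_cases j <;>
    simp [diracGamma, minkEta] <;> norm_num

lemma gd_herm (μ : Fin 4) :
    (diracGamma μ)ᴴ * diracGamma 0 = diracGamma 0 * diracGamma μ := by
  fin_cases μ <;> ext i j <;> fin_cases i <;> fin_cases j <;>
    simp [diracGamma, Matrix.mul_apply, Fin.sum_univ_four]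

lemma gd_sigma1 (μ ν : Fin 4) : diracSigma μ ν
    = Complex.I • (diracGamma μ * diracGamma ν) - (Complex.I * minkEta μ ν) • 1 := by
  have h := gd_clifford μ ν
  have h2 : diracGamma ν * diracGamma μ = (2 * minkEta μ ν) • (1 : Matrix (Fin 4) (Fin 4) ℂ)
    - diracGamma μ * diracGamma ν := by rw [← h]; abel
  unfold diracSigma
  rw [h2]
  module

lemma gd_sigma2 (μ ν : Fin 4) : diracSigma μ ν
    = (Complex.I * minkEta μ ν) • 1 - Complex.I • (diracGamma ν * diracGamma μ) := by
  have h := gd_clifford μ ν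
  have h2 : diracGamma μ * diracGamma ν = (2 * minkEta μ ν) • (1 : Matrix (Fin 4) (Fin 4) ℂ)
    - diracGamma ν * diracGamma μ := by rw [← h]; abel
  unfold diracSigma
  rw [h2]
  module

lemma gd_dirac_adj (ℏ m : ℝ) (Ψ : (Fin 4 → ℝ) → (Fin 4 → ℂ)) (hΨ : ContDiff ℝ 2 Ψ)
    (x : Fin 4 → ℝ)
    (hDirac : (Complex.I * (ℏ : ℂ)) •
        (∑ μ : Fin 4, (diracGamma μ).mulVec (pd μ Ψ x)) = (m : ℂ) • Ψ x) :
    (-(Complex.I * (ℏ : ℂ))) • (∑ μ : Fin 4, Matrix.vecMul (pd μ (diracAdjoint Ψ) x)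
      (diracGamma μ)) = (m : ℂ) • diracAdjoint Ψ x := by
  have h := congrArg (fun v => Matrix.vecMul (star v) (diracGamma 0)) hDirac
  simp only [star_smul, star_sum, Matrix.star_mulVec, Matrix.smul_vecMul, Matrix.sum_vecMul,
    Matrix.vecMul_vecMul, gd_herm] at h
  simp only [gd_pd_adj Ψ hΨ, Matrix.vecMul_vecMul]
  have e : diracAdjoint Ψ x = Matrix.vecMul (star (Ψ x)) (diracGamma 0) := rfl
  rw [e]
  simpa using h

lemma gd_part1 (ℏ m : ℝ) (hℏ : 0 < ℏ) (hm : 0 < m)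
    (Ψ : (Fin 4 → ℝ) → (Fin 4 → ℂ)) (hΨ : ContDiff ℝ 2 Ψ) (x : Fin 4 → ℝ)
    (hDirac : (Complex.I * (ℏ : ℂ)) •
        (∑ μ : Fin 4, (diracGamma μ).mulVec (pd μ Ψ x)) = (m : ℂ) • Ψ x) (μ : Fin 4) :
    diracAdjoint Ψ x ⬝ᵥ (diracGamma μ).mulVec (Ψ x)
          = jPolar ℏ m Ψ μ x + jCon ℏ m Ψ μ x := by
  have hA := gd_dirac_adj ℏ m Ψ hΨ x hDirac
  have h1 := congrArg (fun v => diracAdjoint Ψ x ⬝ᵥ (diracGamma μ).mulVec v) hDirac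
  have h2 := congrArg (fun v => v ⬝ᵥ (diracGamma μ).mulVec (Ψ x)) hA
  have hm' : (m : ℂ) ≠ 0 := by exact_mod_cast hm.ne'
  unfold jPolar jCon
  have e : ∀ ν, pd ν (fun y => diracAdjoint Ψ y ⬝ᵥ (diracSigma μ ν).mulVec (Ψ y)) x
      = Complex.I * (diracAdjoint Ψ x ⬝ᵥ (diracGamma μ).mulVec
            ((diracGamma ν).mulVec (pd ν Ψ x)))
        - Complex.I * (Matrix.vecMul (pd ν (diracAdjoint Ψ) x) (diracGamma ν)
            ⬝ᵥ (diracGamma μ).mulVec (Ψ x))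
        + Complex.I * (minkEta μ ν * (pd ν (diracAdjoint Ψ) x ⬝ᵥ Ψ x
            - diracAdjoint Ψ x ⬝ᵥ pd ν Ψ x)) := by
    intro ν
    rw [gd_pd_bil _ _ (gd_adj_contDiff Ψ hΨ) hΨ]
    nth_rewrite 1 [gd_sigma2]
    rw [gd_sigma1]
    simp only [Matrix.sub_mulVec, Matrix.smul_mulVec, Matrix.one_mulVec, dotProduct_sub,
      dotProduct_smul, smul_eq_mul, ← Matrix.mulVec_mulVec, ← Matrix.dotProduct_mulVec]
    ring
  have e3 : ∑ ν, Complex.I * (minkEta μ ν * (pd ν (diracAdjoint Ψ) x ⬝ᵥ Ψ x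
            - diracAdjoint Ψ x ⬝ᵥ pd ν Ψ x)) = Complex.I * (minkEta μ μ *
            (pd μ (diracAdjoint Ψ) x ⬝ᵥ Ψ x - diracAdjoint Ψ x ⬝ᵥ pd μ Ψ x)) := by
    refine Finset.sum_eq_single μ (fun b _ hb => ?_) (by simp)
    simp [minkEta, hb.symm]
  simp only [Matrix.mulVec_smul, dotProduct_smul, smul_dotProduct, smul_eq_mul,
    Matrix.mulVec_sum, dotProduct_sum, sum_dotProduct] at h1 h2
  simp only [e]
  rw [Finset.sum_add_distrib, Finset.sum_sub_distrib, e3, ← Finset.mul_sum, ← Finset.mul_sum]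
  field_simp
  generalize (∑ i, diracAdjoint Ψ x ⬝ᵥ (diracGamma μ).mulVec
            ((diracGamma i).mulVec (pd i Ψ x))) = S at *
  generalize (∑ i, Matrix.vecMul (pd i (diracAdjoint Ψ) x) (diracGamma i)
            ⬝ᵥ (diracGamma μ).mulVec (Ψ x)) = T at *
  linear_combination (-Complex.I) * h1 - Complex.I * h2 -
    ((ℏ : ℂ) * minkEta μ μ * (pd μ (diracAdjoint Ψ) x ⬝ᵥ Ψ x
      - diracAdjoint Ψ x ⬝ᵥ pd μ Ψ x)) * Complex.I_sq

lemma gd_cons (ℏ m : ℝ) (hℏ : 0 < ℏ)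
    (Ψ : (Fin 4 → ℝ) → (Fin 4 → ℂ)) (hΨ : ContDiff ℝ 2 Ψ) (x : Fin 4 → ℝ)
    (hDirac : (Complex.I * (ℏ : ℂ)) •
        (∑ μ : Fin 4, (diracGamma μ).mulVec (pd μ Ψ x)) = (m : ℂ) • Ψ x) :
    ∑ μ, pd μ (fun y => diracAdjoint Ψ y ⬝ᵥ (diracGamma μ).mulVec (Ψ y)) x = 0 := by
  have hA := gd_dirac_adj ℏ m Ψ hΨ x hDirac
  have h1 := congrArg (fun v => diracAdjoint Ψ x ⬝ᵥ v) hDirac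
  have h2 := congrArg (fun v => v ⬝ᵥ (Ψ x)) hA
  simp only [gd_pd_bil _ _ (gd_adj_contDiff Ψ hΨ) hΨ]
  simp only [dotProduct_smul, smul_dotProduct, smul_eq_mul,
    dotProduct_sum, sum_dotProduct, ← Matrix.dotProduct_mulVec] at h1 h2
  rw [Finset.sum_add_distrib]
  have hz : Complex.I * (ℏ : ℂ) ≠ 0 := mul_ne_zero Complex.I_ne_zero (by exact_mod_cast hℏ.ne')
  apply mul_left_cancel₀ hz
  linear_combination h1 - h2

lemma gd_sig_anti (μ ν : Fin 4) : diracSigma μ ν = - diracSigma ν μ := by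
  unfold diracSigma
  module

lemma gd_jPolar_diff (ℏ m : ℝ) (Ψ : (Fin 4 → ℝ) → (Fin 4 → ℂ)) (hΨ : ContDiff ℝ 2 Ψ)
    (μ : Fin 4) : Differentiable ℝ (jPolar ℏ m Ψ μ) := by
  have h := fun ν => gd_pd_diff _ (gd_bil_contDiff _ _ (gd_adj_contDiff Ψ hΨ) hΨ
    (diracSigma μ ν)) ν
  unfold jPolar
  fun_prop

lemma gd_part2 (ℏ m : ℝ) (Ψ : (Fin 4 → ℝ) → (Fin 4 → ℂ)) (hΨ : ContDiff ℝ 2 Ψ)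
    (x : Fin 4 → ℝ) : ∑ μ : Fin 4, pd μ (jPolar ℏ m Ψ μ) x = 0 := by
  have hc := fun M => gd_bil_contDiff _ _ (gd_adj_contDiff Ψ hΨ) hΨ M
  have h := fun μ ν => gd_pd_diff _ (hc (diracSigma μ ν)) ν
  let F : Fin 4 → Fin 4 → ℂ := fun μ ν => pd μ (pd ν (fun y => diracAdjoint Ψ y ⬝ᵥ
    (diracSigma μ ν).mulVec (Ψ y))) x
  have e : ∀ μ, pd μ (jPolar ℏ m Ψ μ) x = ((ℏ : ℂ) / (2 * m)) * ∑ ν, F μ ν := by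
    intro μ
    unfold jPolar
    rw [gd_pd_const_mul _ _ _ (by fun_prop), gd_pd_sum _ _ (fun ν => h μ ν x)]
  have hF : ∀ μ ν, F μ ν = - F ν μ := by
    intro μ ν
    simp only [F]
    rw [gd_pd_symm _ (hc _)]
    have : (fun y => diracAdjoint Ψ y ⬝ᵥ (diracSigma μ ν).mulVec (Ψ y))
      = fun y => (-1) * (diracAdjoint Ψ y ⬝ᵥ (diracSigma ν μ).mulVec (Ψ y)) := by
      ext y
      rw [gd_sig_anti μ ν, Matrix.neg_mulVec, dotProduct_neg]
      ring
    rw [this]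
    have h3 : pd μ (fun y => (-1) * (diracAdjoint Ψ y ⬝ᵥ (diracSigma ν μ).mulVec (Ψ y)))
      = fun z => (-1) * pd μ (fun y => diracAdjoint Ψ y ⬝ᵥ (diracSigma ν μ).mulVec (Ψ y)) z := by
      ext z
      exact gd_pd_const_mul _ _ _ ((hc _).differentiable (by norm_num) z) _
    rw [h3, gd_pd_const_mul _ _ _ (h ν μ x)]
    ring
  simp only [e]
  rw [← Finset.mul_sum]
  have hs : ∑ μ, ∑ ν, F μ ν = - ∑ μ, ∑ ν, F μ ν := by
    conv_lhs => rw [Finset.sum_comm]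
    simp only [← Finset.sum_neg_distrib]
    exact Finset.sum_congr rfl fun i _ => Finset.sum_congr rfl fun j _ => hF j i
  rw [self_eq_neg.mp hs, mul_zero]

/-- Gordon decomposition of the Dirac current in flat spacetime:
the Dirac current decomposes into polarization and convection currents
which are separately conserved. -/
theorem gordon_decomposition
    (ℏ m : ℝ) (hℏ : 0 < ℏ) (hm : 0 < m)
    (Ψ : (Fin 4 → ℝ) → (Fin 4 → ℂ))
    (hΨ : ContDiff ℝ 2 Ψ)
    (hDirac : ∀ x, (Complex.I * (ℏ : ℂ)) •
        (∑ μ : Fin 4, (diracGamma μ).mulVec (pd μ Ψ x)) = (m : ℂ) • Ψ x) :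
    (∀ x, ∀ μ : Fin 4,
        diracAdjoint Ψ x ⬝ᵥ (diracGamma μ).mulVec (Ψ x)
          = jPolar ℏ m Ψ μ x + jCon ℏ m Ψ μ x) ∧
    (∀ x, ∑ μ : Fin 4, pd μ (jPolar ℏ m Ψ μ) x = 0) ∧
    (∀ x, ∑ μ : Fin 4, pd μ (jCon ℏ m Ψ μ) x = 0) := by
  have h1 := fun x μ => gd_part1 ℏ m hℏ hm Ψ hΨ x (hDirac x) μ
  refine ⟨h1, gd_part2 ℏ m Ψ hΨ, fun x => ?_⟩
  have e : ∀ μ, jCon ℏ m Ψ μ = fun y => diracAdjoint Ψ y ⬝ᵥ (diracGamma μ).mulVec (Ψ y)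
      - jPolar ℏ m Ψ μ y := by
    intro μ
    ext y
    rw [h1 y μ]
    ring
  have e2 : ∀ μ, pd μ (jCon ℏ m Ψ μ) x
      = pd μ (fun y => diracAdjoint Ψ y ⬝ᵥ (diracGamma μ).mulVec (Ψ y)) x
        - pd μ (jPolar ℏ m Ψ μ) x := by
    intro μ
    rw [e μ]
    exact gd_pd_sub _ _ _ ((gd_bil_contDiff _ _ (gd_adj_contDiff Ψ hΨ) hΨ _).differentiable
      (by norm_num) x) (gd_jPolar_diff ℏ m Ψ hΨ μ x) μ
  simp only [e2]
  rw [Finset.sum_sub_distrib, gd_cons ℏ m hℏ Ψ hΨ x (hDirac x), gd_part2 ℏ m Ψ hΨ x, sub_zero]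
end
end

section
/- Let M > a ≥ 0 and E, Φ, κ ∈ ℝ, and let r, ϑ satisfy r > M + √(M²−a²), 0 < ϑ < π, R ≥ 0 and Θ ≥ 0. Define the Boyer–Lindquist velocity components ṫ := [((r²+a²)² − a²Δ sin²ϑ)E − 2MarΦ]/(ΣΔ), φ̇ := [2MarE + ((Δ − a²sin²ϑ)/sin²ϑ)Φ]/(ΣΔ), ṙ := √R/Σ, ϑ̇ := √Θ/Σ. Then this velocity has unit Kerr norm: g_{tt}ṫ² + 2g_{tφ}ṫφ̇ + g_{rr}ṙ² + g_{ϑϑ}ϑ̇² + g_{φφ}φ̇² = 1. -/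
noncomputable section

/-- Σ := r² + a²cos²ϑ. -/
def Sigk (a r ϑ : ℝ) : ℝ := r ^ 2 + a ^ 2 * Real.cos ϑ ^ 2

/-- Δ := r² − 2Mr + a². -/
def Delk (M a r : ℝ) : ℝ := r ^ 2 - 2 * M * r + a ^ 2

/-- 𝒫 := E(r²+a²) − aΦ. -/
def Pk (a E Φ r : ℝ) : ℝ := E * (r ^ 2 + a ^ 2) - a * Φ

/-- 𝒟 := aE sinϑ − Φ/sinϑ. -/
def Dk (a E Φ ϑ : ℝ) : ℝ := a * E * Real.sin ϑ - Φ / Real.sin ϑ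

/-- R := 𝒫² − Δ(κ+r²). -/
def Rk (M a E Φ κ r : ℝ) : ℝ := Pk a E Φ r ^ 2 - Delk M a r * (κ + r ^ 2)

/-- Θ := κ − a²cos²ϑ − 𝒟². -/
def Thk (a E Φ κ ϑ : ℝ) : ℝ := κ - a ^ 2 * Real.cos ϑ ^ 2 - Dk a E Φ ϑ ^ 2

/-- ϖ := (κ − a²cos²ϑ)/(r²+κ). -/
def piomk (a κ r ϑ : ℝ) : ℝ := (κ - a ^ 2 * Real.cos ϑ ^ 2) / (r ^ 2 + κ)

/-- ϱ := 𝒫² − Δ(κ − a²cos²ϑ). -/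
def vrhok (M a E Φ κ r ϑ : ℝ) : ℝ :=
  Pk a E Φ r ^ 2 - Delk M a r * (κ - a ^ 2 * Real.cos ϑ ^ 2)

/-- ρ := 𝒫² − ΔΘ. -/
def rhok (M a E Φ κ r ϑ : ℝ) : ℝ := Pk a E Φ r ^ 2 - Delk M a r * Thk a E Φ κ ϑ

/-- Minkowski inner product of frame-component 4-tuples:
⟨u,v⟩_η := u⁰v⁰ − u¹v¹ − u²v² − u³v³. -/
def minkInner (u v : Fin 4 → ℝ) : ℝ :=
  u 0 * v 0 - u 1 * v 1 - u 2 * v 2 - u 3 * v 3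

open Real in
/-- The Boyer–Lindquist velocity built from the Kerr first integrals has unit
Kerr norm. -/
theorem kerr_velocity_unit_norm
    (M a E Φ κ r ϑ : ℝ) (ha : 0 ≤ a) (haM : a < M)
    (hr : M + Real.sqrt (M ^ 2 - a ^ 2) < r)
    (hϑ0 : 0 < ϑ) (hϑπ : ϑ < π)
    (hR : 0 ≤ Rk M a E Φ κ r) (hΘ : 0 ≤ Thk a E Φ κ ϑ) :
    (Delk M a r - a ^ 2 * sin ϑ ^ 2) / Sigk a r ϑ *
        ((((r ^ 2 + a ^ 2) ^ 2 - a ^ 2 * Delk M a r * sin ϑ ^ 2) * E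
            - 2 * M * a * r * Φ) / (Sigk a r ϑ * Delk M a r)) ^ 2
      + 2 * (2 * M * a * r * sin ϑ ^ 2 / Sigk a r ϑ) *
          ((((r ^ 2 + a ^ 2) ^ 2 - a ^ 2 * Delk M a r * sin ϑ ^ 2) * E
              - 2 * M * a * r * Φ) / (Sigk a r ϑ * Delk M a r)) *
          ((2 * M * a * r * E
              + (Delk M a r - a ^ 2 * sin ϑ ^ 2) / sin ϑ ^ 2 * Φ)
            / (Sigk a r ϑ * Delk M a r))
      + -(Sigk a r ϑ) / Delk M a r * (Real.sqrt (Rk M a E Φ κ r) / Sigk a r ϑ) ^ 2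
      + -(Sigk a r ϑ) * (Real.sqrt (Thk a E Φ κ ϑ) / Sigk a r ϑ) ^ 2
      + -(sin ϑ ^ 2 * ((r ^ 2 + a ^ 2) ^ 2
            - a ^ 2 * Delk M a r * sin ϑ ^ 2) / Sigk a r ϑ) *
          ((2 * M * a * r * E
              + (Delk M a r - a ^ 2 * sin ϑ ^ 2) / sin ϑ ^ 2 * Φ)
            / (Sigk a r ϑ * Delk M a r)) ^ 2
      = 1 := by
  have hs : sin ϑ ≠ 0 := (sin_pos_of_pos_of_lt_pi hϑ0 hϑπ).ne'
  have hsq : 0 ≤ M ^ 2 - a ^ 2 := by nlinarith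
  have hq0 := Real.sqrt_nonneg (M ^ 2 - a ^ 2)
  have hq := Real.sq_sqrt hsq
  have hr0 : 0 < r := by linarith
  have hD : Delk M a r ≠ 0 := by
    have : 0 < Delk M a r := by unfold Delk; nlinarith
    exact this.ne'
  have hS : Sigk a r ϑ ≠ 0 := by
    have : 0 < Sigk a r ϑ := by unfold Sigk; positivity
    exact this.ne'
  have hMr : 2 * M * r = r ^ 2 + a ^ 2 - Delk M a r := by unfold Delk; ring
  have hSs : Sigk a r ϑ = r ^ 2 + a ^ 2 - a ^ 2 * sin ϑ ^ 2 := by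
    unfold Sigk; rw [Real.cos_sq']; ring
  have hM1 : 2 * M * a * r = a * (r ^ 2 + a ^ 2 - Delk M a r) := by rw [← hMr]; ring
  rw [div_pow (√(Rk M a E Φ κ r)), div_pow (√(Thk a E Φ κ ϑ)), Real.sq_sqrt hR, Real.sq_sqrt hΘ, hM1]
  set T := (((r ^ 2 + a ^ 2) ^ 2 - a ^ 2 * Delk M a r * sin ϑ ^ 2) * E
            - a * (r ^ 2 + a ^ 2 - Delk M a r) * Φ) / (Sigk a r ϑ * Delk M a r) with hT
  set Y := (a * (r ^ 2 + a ^ 2 - Delk M a r) * E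
              + (Delk M a r - a ^ 2 * sin ϑ ^ 2) / sin ϑ ^ 2 * Φ)
            / (Sigk a r ϑ * Delk M a r) with hY
  have h1 : T - a * sin ϑ ^ 2 * Y = Pk a E Φ r / Delk M a r := by
    rw [hT, hY, Pk]
    field_simp
    rw [hSs]; ring
  have h2 : (r ^ 2 + a ^ 2) * Y - a * T = - Dk a E Φ ϑ / sin ϑ := by
    rw [hT, hY, Dk]
    field_simp
    rw [hSs]; ring
  have h3 : (Delk M a r - a ^ 2 * sin ϑ ^ 2) / Sigk a r ϑ * T ^ 2
      + 2 * (a * (r ^ 2 + a ^ 2 - Delk M a r) * sin ϑ ^ 2 / Sigk a r ϑ) * T * Y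
      + -(sin ϑ ^ 2 * ((r ^ 2 + a ^ 2) ^ 2
            - a ^ 2 * Delk M a r * sin ϑ ^ 2) / Sigk a r ϑ) * Y ^ 2
      = Delk M a r / Sigk a r ϑ * (T - a * sin ϑ ^ 2 * Y) ^ 2
        - sin ϑ ^ 2 / Sigk a r ϑ * ((r ^ 2 + a ^ 2) * Y - a * T) ^ 2 := by
    ring
  rw [h1, h2] at h3
  have h4 : Delk M a r / Sigk a r ϑ * (Pk a E Φ r / Delk M a r) ^ 2
        - sin ϑ ^ 2 / Sigk a r ϑ * (- Dk a E Φ ϑ / sin ϑ) ^ 2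
      + -(Sigk a r ϑ) / Delk M a r * (Rk M a E Φ κ r / Sigk a r ϑ ^ 2)
      + -(Sigk a r ϑ) * (Thk a E Φ κ ϑ / Sigk a r ϑ ^ 2) = 1 := by
    rw [Rk, Thk]
    field_simp
    rw [Sigk]; ring
  linarith
end
end

section
/- Let M > a ≥ 0 and E, Φ, κ ∈ ℝ, and let r, ϑ be such that sin ϑ > 0, Δ > 0, Σ > 0, κ > a²cos²ϑ (so ϖ > 0 and κ > 0), R ≥ 0 and Θ ≥ 0. Define the 4-tuples of frame components U := Σ^{−1/2}(𝒫/√Δ, √R/√Δ, 𝒟, √Θ), L̃₁ := (κΣ)^{−1/2}(√ϖ·r√R/√Δ, √ϖ·r𝒫/√Δ, −(a cosϑ/√ϖ)√Θ, (a cosϑ/√ϖ)𝒟), L̃₂ := Σ^{−1/2}(√ϖ·𝒫/√Δ, √ϖ·√R/√Δ, 𝒟/√ϖ, √Θ/√ϖ), L₃ := (κΣ)^{−1/2}(a cosϑ√R/√Δ, a cosϑ·𝒫/√Δ, r√Θ, −r𝒟). Then (U, L̃₁, L̃₂, L₃) is an η-orthonormal tetrad: ⟨U,U⟩_η = 1,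 ⟨L̃₁,L̃₁⟩_η = ⟨L̃₂,L̃₂⟩_η = ⟨L₃,L₃⟩_η = −1, and all pairwise inner products among distinct members vanish. -/
noncomputable section

open Real

/-- Frame components of the 4-velocity U. -/
def Uframe (M a E Φ κ r ϑ : ℝ) : Fin 4 → ℝ :=
  (1 / Real.sqrt (Sigk a r ϑ)) •
    ![Pk a E Φ r / Real.sqrt (Delk M a r),
      Real.sqrt (Rk M a E Φ κ r) / Real.sqrt (Delk M a r),
      Dk a E Φ ϑ,
      Real.sqrt (Thk a E Φ κ ϑ)]

/-- Frame components of L̃₁. -/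
def Lt1frame (M a E Φ κ r ϑ : ℝ) : Fin 4 → ℝ :=
  (1 / Real.sqrt (κ * Sigk a r ϑ)) •
    ![Real.sqrt (piomk a κ r ϑ) * r * Real.sqrt (Rk M a E Φ κ r) /
        Real.sqrt (Delk M a r),
      Real.sqrt (piomk a κ r ϑ) * r * Pk a E Φ r / Real.sqrt (Delk M a r),
      -(a * Real.cos ϑ / Real.sqrt (piomk a κ r ϑ)) * Real.sqrt (Thk a E Φ κ ϑ),
      a * Real.cos ϑ / Real.sqrt (piomk a κ r ϑ) * Dk a E Φ ϑ]

/-- Frame components of L̃₂. -/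
def Lt2frame (M a E Φ κ r ϑ : ℝ) : Fin 4 → ℝ :=
  (1 / Real.sqrt (Sigk a r ϑ)) •
    ![Real.sqrt (piomk a κ r ϑ) * Pk a E Φ r / Real.sqrt (Delk M a r),
      Real.sqrt (piomk a κ r ϑ) * Real.sqrt (Rk M a E Φ κ r) /
        Real.sqrt (Delk M a r),
      Dk a E Φ ϑ / Real.sqrt (piomk a κ r ϑ),
      Real.sqrt (Thk a E Φ κ ϑ) / Real.sqrt (piomk a κ r ϑ)]

/-- Frame components of L₃. -/
def L3frame (M a E Φ κ r ϑ : ℝ) : Fin 4 → ℝ :=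
  (1 / Real.sqrt (κ * Sigk a r ϑ)) •
    ![a * Real.cos ϑ * Real.sqrt (Rk M a E Φ κ r) / Real.sqrt (Delk M a r),
      a * Real.cos ϑ * Pk a E Φ r / Real.sqrt (Delk M a r),
      r * Real.sqrt (Thk a E Φ κ ϑ),
      -(r * Dk a E Φ ϑ)]

/-- (U, L̃₁, L̃₂, L₃) is an η-orthonormal tetrad. -/
theorem kerr_tetrad_orthonormal
    (M a E Φ κ r ϑ : ℝ) (ha : 0 ≤ a) (haM : a < M)
    (hsin : 0 < Real.sin ϑ) (hΔ : 0 < Delk M a r) (hSig : 0 < Sigk a r ϑ)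
    (hκ : a ^ 2 * Real.cos ϑ ^ 2 < κ)
    (hR : 0 ≤ Rk M a E Φ κ r) (hΘ : 0 ≤ Thk a E Φ κ ϑ) :
    minkInner (Uframe M a E Φ κ r ϑ) (Uframe M a E Φ κ r ϑ) = 1 ∧
    minkInner (Lt1frame M a E Φ κ r ϑ) (Lt1frame M a E Φ κ r ϑ) = -1 ∧
    minkInner (Lt2frame M a E Φ κ r ϑ) (Lt2frame M a E Φ κ r ϑ) = -1 ∧
    minkInner (L3frame M a E Φ κ r ϑ) (L3frame M a E Φ κ r ϑ) = -1 ∧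
    minkInner (Uframe M a E Φ κ r ϑ) (Lt1frame M a E Φ κ r ϑ) = 0 ∧
    minkInner (Uframe M a E Φ κ r ϑ) (Lt2frame M a E Φ κ r ϑ) = 0 ∧
    minkInner (Uframe M a E Φ κ r ϑ) (L3frame M a E Φ κ r ϑ) = 0 ∧
    minkInner (Lt1frame M a E Φ κ r ϑ) (Lt2frame M a E Φ κ r ϑ) = 0 ∧
    minkInner (Lt1frame M a E Φ κ r ϑ) (L3frame M a E Φ κ r ϑ) = 0 ∧
    minkInner (Lt2frame M a E Φ κ r ϑ) (L3frame M a E Φ κ r ϑ) = 0 := by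
  have hκ0 : 0 < κ := lt_of_le_of_lt (by positivity) hκ
  have hK : 0 < r ^ 2 + κ := by positivity
  have hN : 0 < κ - a ^ 2 * Real.cos ϑ ^ 2 := by linarith
  have hw : 0 < piomk a κ r ϑ := div_pos hN hK
  have hw2 : Real.sqrt (piomk a κ r ϑ) ^ 2 * (r ^ 2 + κ) = κ - a ^ 2 * Real.cos ϑ ^ 2 := by
    rw [Real.sq_sqrt hw.le, piomk, div_mul_cancel₀ _ hK.ne']
  have hw0 : Real.sqrt (piomk a κ r ϑ) ≠ 0 := (Real.sqrt_pos.2 hw).ne'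
  have hd0 : Real.sqrt (Delk M a r) ≠ 0 := (Real.sqrt_pos.2 hΔ).ne'
  have hd2 := Real.sq_sqrt hΔ.le
  have hR2 := Real.sq_sqrt hR
  have hT2 := Real.sq_sqrt hΘ
  have hs0 : Real.sqrt (Sigk a r ϑ) ≠ 0 := (Real.sqrt_pos.2 hSig).ne'
  have hs2 := Real.sq_sqrt hSig.le
  have ht : 0 < κ * Sigk a r ϑ := by positivity
  have ht0 : Real.sqrt (κ * Sigk a r ϑ) ≠ 0 := (Real.sqrt_pos.2 ht).ne'
  have ht2 := Real.sq_sqrt ht.le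
  have hs : (1 / Real.sqrt (Sigk a r ϑ)) ^ 2 * (r ^ 2 + a ^ 2 * Real.cos ϑ ^ 2) = 1 := by
    rw [div_pow, hs2, one_pow, ← Sigk, one_div, inv_mul_cancel₀ hSig.ne']
  have hk : (1 / Real.sqrt (κ * Sigk a r ϑ)) ^ 2 *
      (κ * (r ^ 2 + a ^ 2 * Real.cos ϑ ^ 2)) = 1 := by
    rw [div_pow, ht2, one_pow, ← Sigk, one_div, inv_mul_cancel₀ ht.ne']
  have hpq : (Pk a E Φ r / Real.sqrt (Delk M a r)) ^ 2 -
      (Real.sqrt (Rk M a E Φ κ r) / Real.sqrt (Delk M a r)) ^ 2 = r ^ 2 + κ := by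
    rw [div_pow, div_pow, hd2, hR2, Rk]
    field_simp
    ring
  have hDT : Dk a E Φ ϑ ^ 2 + Real.sqrt (Thk a E Φ κ ϑ) ^ 2 =
      κ - a ^ 2 * Real.cos ϑ ^ 2 := by
    rw [hT2, Thk]; ring
  have hwv := mul_inv_cancel₀ hw0
  simp only [minkInner, Uframe, Lt1frame, Lt2frame, L3frame, Pi.smul_apply, smul_eq_mul,
    Matrix.cons_val]
  clear hd2 hR2 hT2 hs2 ht2 hs0 ht0 ht
  simp only [mul_div_assoc] at *
  generalize 1 / Real.sqrt (Sigk a r ϑ) = s at *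
  generalize 1 / Real.sqrt (κ * Sigk a r ϑ) = t at *
  generalize Pk a E Φ r / Real.sqrt (Delk M a r) = p at *
  generalize Real.sqrt (Rk M a E Φ κ r) / Real.sqrt (Delk M a r) = q at *
  generalize Real.sqrt (Thk a E Φ κ ϑ) = T at *
  generalize Dk a E Φ ϑ = D at *
  generalize Real.sqrt (piomk a κ r ϑ) = w at *
  generalize Real.cos ϑ = c at *
  simp only [div_eq_mul_inv]
  generalize w⁻¹ = v at *
  have hv1 : v * (κ - a ^ 2 * c ^ 2) = w * (r ^ 2 + κ) := by
    linear_combination (-v) * hw2 + w * (r ^ 2 + κ) * hwv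
  have hv2 : v ^ 2 * (κ - a ^ 2 * c ^ 2) = r ^ 2 + κ := by
    linear_combination v * hv1 + (r ^ 2 + κ) * hwv
  refine ⟨?_, ?_, ?_, ?_, ?_, ?_, ?_, ?_, ?_, ?_⟩
  · linear_combination s ^ 2 * hpq - s ^ 2 * hDT + hs
  · linear_combination (-t ^ 2 * w ^ 2 * r ^ 2) * hpq - t ^ 2 * a ^ 2 * c ^ 2 * v ^ 2 * hDT
      - t ^ 2 * r ^ 2 * hw2 - t ^ 2 * a ^ 2 * c ^ 2 * hv2 - hk
  · linear_combination s ^ 2 * w ^ 2 * hpq - s ^ 2 * v ^ 2 * hDT + s ^ 2 * hw2 - s ^ 2 * hv2 - hs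
  · linear_combination (-t ^ 2 * a ^ 2 * c ^ 2) * hpq - t ^ 2 * r ^ 2 * hDT - hk
  · ring
  · linear_combination s ^ 2 * w * hpq - s ^ 2 * v * hDT - s ^ 2 * hv1
  · ring
  · ring
  · linear_combination (-t ^ 2 * w * r * a * c) * hpq + t ^ 2 * a * c * r * v * hDT
      + t ^ 2 * a * c * r * hv1
  · ring
end
end

section
/- Let M > a ≥ 0, E, Φ, κ ∈ ℝ, and let r, ϑ satisfy sin ϑ ≠ 0, κ > 0, Σ > 0, R ≥ 0, Θ ≥ 0, ρ > 0, ϱ > 0, ϖ > 0 and κ + r² > 0. Set c₁ := (κ+r²)(rϖ√(RΘ) − a cosϑ·𝒟𝒫) and c₂ := (κ+r²)(a cosϑ·ϱ√Θ + rϖ·𝒟𝒫√R). For χ ∈ ℝ define the 3×3 real matrix Λ with rows: row 1 = ( (r𝒟𝒫 + a cosϑ√(RΘ))/√(κΣρ), −(√κ sinχ·Σ𝒫√Θ + c₁cosχ)/(√ϖ(κ+r²)√(κΣρ)), (√κ cosχ·Σ𝒫√Θ − c₁sinχ)/(√ϖ(κ+r²)√(κΣρ)) ); row 2 = ( (rϱ√Θ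 − a cosϑ·𝒟𝒫√R)/√(κΣϱρ), (√κ sinχ·Σ𝒟𝒫² + c₂cosχ)/(√ϖ(κ+r²)√(κΣϱρ)), (−√κ cosχ·Σ𝒟𝒫² + c₂sinχ)/(√ϖ(κ+r²)√(κΣϱρ)) ); row 3 = ( −a cosϑ·𝒫/√(κϱ), √ϖ(cosχ·r𝒫 − √κ sinχ·√R)/√(κϱ), √ϖ(sinχ·r𝒫 + √κ cosχ·√R)/√(κϱ) ). Then ΛᵀΛ = I₃ and det Λ = 1; i.e. Λ ∈ SO(3). -/
noncomputable section

/-- c₁ := (κ+r²)(rϖ√(RΘ) − a cosϑ·𝒟𝒫). -/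
def c1k (M a E Φ κ r ϑ : ℝ) : ℝ :=
  (κ + r ^ 2) * (r * piomk a κ r ϑ *
      Real.sqrt (Rk M a E Φ κ r * Thk a E Φ κ ϑ)
    - a * Real.cos ϑ * Dk a E Φ ϑ * Pk a E Φ r)

/-- c₂ := (κ+r²)(a cosϑ·ϱ√Θ + rϖ·𝒟𝒫√R). -/
def c2k (M a E Φ κ r ϑ : ℝ) : ℝ :=
  (κ + r ^ 2) * (a * Real.cos ϑ * vrhok M a E Φ κ r ϑ *
      Real.sqrt (Thk a E Φ κ ϑ)
    + r * piomk a κ r ϑ * Dk a E Φ ϑ * Pk a E Φ r *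
        Real.sqrt (Rk M a E Φ κ r))

/-- The geometrically induced rotation matrix Λ relating the reference 3-frame
to the parallel-propagated 3-frame along a timelike Kerr geodesic. -/
def LambdaRot (M a E Φ κ r ϑ χ : ℝ) : Matrix (Fin 3) (Fin 3) ℝ :=
  !![(r * Dk a E Φ ϑ * Pk a E Φ r + a * Real.cos ϑ *
        Real.sqrt (Rk M a E Φ κ r * Thk a E Φ κ ϑ)) /
      Real.sqrt (κ * Sigk a r ϑ * rhok M a E Φ κ r ϑ),
    -(Real.sqrt κ * Real.sin χ * Sigk a r ϑ * Pk a E Φ r *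
          Real.sqrt (Thk a E Φ κ ϑ) + c1k M a E Φ κ r ϑ * Real.cos χ) /
      (Real.sqrt (piomk a κ r ϑ) * (κ + r ^ 2) *
        Real.sqrt (κ * Sigk a r ϑ * rhok M a E Φ κ r ϑ)),
    (Real.sqrt κ * Real.cos χ * Sigk a r ϑ * Pk a E Φ r *
          Real.sqrt (Thk a E Φ κ ϑ) - c1k M a E Φ κ r ϑ * Real.sin χ) /
      (Real.sqrt (piomk a κ r ϑ) * (κ + r ^ 2) *
        Real.sqrt (κ * Sigk a r ϑ * rhok M a E Φ κ r ϑ));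
    (r * vrhok M a E Φ κ r ϑ * Real.sqrt (Thk a E Φ κ ϑ)
        - a * Real.cos ϑ * Dk a E Φ ϑ * Pk a E Φ r *
            Real.sqrt (Rk M a E Φ κ r)) /
      Real.sqrt (κ * Sigk a r ϑ * vrhok M a E Φ κ r ϑ * rhok M a E Φ κ r ϑ),
    (Real.sqrt κ * Real.sin χ * Sigk a r ϑ * Dk a E Φ ϑ * Pk a E Φ r ^ 2
        + c2k M a E Φ κ r ϑ * Real.cos χ) /
      (Real.sqrt (piomk a κ r ϑ) * (κ + r ^ 2) *
        Real.sqrt (κ * Sigk a r ϑ * vrhok M a E Φ κ r ϑ * rhok M a E Φ κ r ϑ)),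
    (-(Real.sqrt κ * Real.cos χ * Sigk a r ϑ * Dk a E Φ ϑ * Pk a E Φ r ^ 2)
        + c2k M a E Φ κ r ϑ * Real.sin χ) /
      (Real.sqrt (piomk a κ r ϑ) * (κ + r ^ 2) *
        Real.sqrt (κ * Sigk a r ϑ * vrhok M a E Φ κ r ϑ * rhok M a E Φ κ r ϑ));
    -(a * Real.cos ϑ * Pk a E Φ r) / Real.sqrt (κ * vrhok M a E Φ κ r ϑ),
    Real.sqrt (piomk a κ r ϑ) * (Real.cos χ * r * Pk a E Φ r
        - Real.sqrt κ * Real.sin χ * Real.sqrt (Rk M a E Φ κ r)) /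
      Real.sqrt (κ * vrhok M a E Φ κ r ϑ),
    Real.sqrt (piomk a κ r ϑ) * (Real.sin χ * r * Pk a E Φ r
        + Real.sqrt κ * Real.cos χ * Real.sqrt (Rk M a E Φ κ r)) /
      Real.sqrt (κ * vrhok M a E Φ κ r ϑ)]


lemma core_rows (k z y S v h T R r c D P d : ℝ)
    (hk : k ≠ 0) (hz : z ≠ 0) (hy : y ≠ 0) (hS : S ≠ 0) (hv : v ≠ 0) (hh : h ≠ 0)
    (ek : k ^ 2 = y ^ 2 + c ^ 2) (ez : z ^ 2 = y ^ 2 + c ^ 2 + r ^ 2)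
    (eS : S ^ 2 = c ^ 2 + r ^ 2) (eT : T ^ 2 = y ^ 2 - D ^ 2)
    (eR : R ^ 2 = P ^ 2 - d * (y ^ 2 + c ^ 2 + r ^ 2)) (ev : v ^ 2 = P ^ 2 - d * y ^ 2)
    (eh : h ^ 2 = P ^ 2 - d * (y ^ 2 - D ^ 2))
    (u1 u2 u3 f1 f2 f3 b1 b2 b3 : ℝ)
    (hu1 : u1 = (r * D * P + c * (R * T)) / (k * S * h))
    (hf1 : f1 = -(r * y ^ 2 * (R * T) - z ^ 2 * c * D * P) / (y * z * (k * S * h)))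
    (hb1 : b1 = k * S ^ 2 * P * T / (y * z * (k * S * h)))
    (hu2 : u2 = (r * v ^ 2 * T - c * D * P * R) / (k * S * v * h))
    (hf2 : f2 = (z ^ 2 * c * v ^ 2 * T + r * y ^ 2 * D * P * R) / (y * z * (k * S * v * h)))
    (hb2 : b2 = -(k * S ^ 2 * D * P ^ 2) / (y * z * (k * S * v * h)))
    (hu3 : u3 = -(c * P) / (k * v))
    (hf3 : f3 = y / z * (r * P) / (k * v))
    (hb3 : b3 = y / z * (k * R) / (k * v)) :
    u1 ^ 2 + f1 ^ 2 + b1 ^ 2 = 1 ∧ u2 ^ 2 + f2 ^ 2 + b2 ^ 2 = 1 ∧ u3 ^ 2 + f3 ^ 2 + b3 ^ 2 = 1 ∧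
    u1 * u2 + f1 * f2 + b1 * b2 = 0 ∧ u1 * u3 + f1 * f3 + b1 * b3 = 0 ∧
    u2 * u3 + f2 * f3 + b2 * b3 = 0 ∧
    u1 * (f2 * b3 - b2 * f3) - u2 * (f1 * b3 - b1 * f3) + u3 * (f1 * b2 - b1 * f2) = 1 := by
  subst hu1 hf1 hb1 hu2 hf2 hb2 hu3 hf3 hb3
  refine ⟨?_, ?_, ?_, ?_, ?_, ?_, ?_⟩
  · field_simp
    grind
  · field_simp
    grind
  · field_simp
    grind
  · field_simp
    grind
  · field_simp
    grind
  · field_simp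
    grind
  · field_simp
    grind

/-- Λ is a rotation: ΛᵀΛ = I₃ and det Λ = 1, i.e. Λ ∈ SO(3). -/
theorem LambdaRot_mem_SO3
    (M a E Φ κ r ϑ χ : ℝ) (ha : 0 ≤ a) (haM : a < M)
    (hsin : Real.sin ϑ ≠ 0) (hκ : 0 < κ) (hSig : 0 < Sigk a r ϑ)
    (hR : 0 ≤ Rk M a E Φ κ r) (hΘ : 0 ≤ Thk a E Φ κ ϑ)
    (hρ : 0 < rhok M a E Φ κ r ϑ) (hϱ : 0 < vrhok M a E Φ κ r ϑ)
    (hϖ : 0 < piomk a κ r ϑ) (hκr : 0 < κ + r ^ 2) :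
    (LambdaRot M a E Φ κ r ϑ χ).transpose * LambdaRot M a E Φ κ r ϑ χ = 1 ∧
    (LambdaRot M a E Φ κ r ϑ χ).det = 1 := by
  have hQ : 0 < κ - a ^ 2 * Real.cos ϑ ^ 2 := by
    have h1 : 0 < r ^ 2 + κ := by linarith
    have h2 := mul_pos hϖ h1
    rwa [piomk, div_mul_cancel₀ _ h1.ne'] at h2
  have hw : Real.sqrt (piomk a κ r ϑ) =
      Real.sqrt (κ - a ^ 2 * Real.cos ϑ ^ 2) / Real.sqrt (κ + r ^ 2) := by
    rw [piomk, Real.sqrt_div hQ.le, add_comm (r ^ 2) κ]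
  have hyp := Real.sqrt_pos.2 hQ
  have hzp := Real.sqrt_pos.2 hκr
  have hkp := Real.sqrt_pos.2 hκ
  have hSp := Real.sqrt_pos.2 hSig
  have hvp := Real.sqrt_pos.2 hϱ
  have hhp := Real.sqrt_pos.2 hρ
  have yy := Real.sq_sqrt hQ.le
  have zz := Real.sq_sqrt hκr.le
  have kk := Real.sq_sqrt hκ.le
  have SS := Real.sq_sqrt hSig.le
  have vv := Real.sq_sqrt hϱ.le
  have hh := Real.sq_sqrt hρ.le
  have TT := Real.sq_sqrt hΘ
  have RR := Real.sq_sqrt hR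
  have n1 : Real.sqrt (κ * Sigk a r ϑ * rhok M a E Φ κ r ϑ) =
      Real.sqrt κ * Real.sqrt (Sigk a r ϑ) * Real.sqrt (rhok M a E Φ κ r ϑ) := by
    rw [Real.sqrt_mul (by positivity), Real.sqrt_mul hκ.le]
  have n2 : Real.sqrt (κ * Sigk a r ϑ * vrhok M a E Φ κ r ϑ * rhok M a E Φ κ r ϑ) =
      Real.sqrt κ * Real.sqrt (Sigk a r ϑ) * Real.sqrt (vrhok M a E Φ κ r ϑ) *
        Real.sqrt (rhok M a E Φ κ r ϑ) := by
    rw [Real.sqrt_mul (by positivity), Real.sqrt_mul (by positivity), Real.sqrt_mul hκ.le]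
  have n3 : Real.sqrt (κ * vrhok M a E Φ κ r ϑ) =
      Real.sqrt κ * Real.sqrt (vrhok M a E Φ κ r ϑ) := Real.sqrt_mul hκ.le _
  have n4 : Real.sqrt (Rk M a E Φ κ r * Thk a E Φ κ ϑ) =
      Real.sqrt (Rk M a E Φ κ r) * Real.sqrt (Thk a E Φ κ ϑ) := Real.sqrt_mul hR _
  have hpi : piomk a κ r ϑ = Real.sqrt (κ - a ^ 2 * Real.cos ϑ ^ 2) ^ 2 /
      Real.sqrt (κ + r ^ 2) ^ 2 := by
    rw [yy, zz, piomk, add_comm (r ^ 2) κ]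
  have hL : ∃ u1 u2 u3 f1 f2 f3 b1 b2 b3 : ℝ,
      LambdaRot M a E Φ κ r ϑ χ =
        !![u1, f1 * Real.cos χ - b1 * Real.sin χ, b1 * Real.cos χ + f1 * Real.sin χ;
           u2, f2 * Real.cos χ - b2 * Real.sin χ, b2 * Real.cos χ + f2 * Real.sin χ;
           u3, f3 * Real.cos χ - b3 * Real.sin χ, b3 * Real.cos χ + f3 * Real.sin χ] ∧
      (u1 ^ 2 + f1 ^ 2 + b1 ^ 2 = 1 ∧ u2 ^ 2 + f2 ^ 2 + b2 ^ 2 = 1 ∧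
        u3 ^ 2 + f3 ^ 2 + b3 ^ 2 = 1 ∧
      u1 * u2 + f1 * f2 + b1 * b2 = 0 ∧ u1 * u3 + f1 * f3 + b1 * b3 = 0 ∧
      u2 * u3 + f2 * f3 + b2 * b3 = 0 ∧
      u1 * (f2 * b3 - b2 * f3) - u2 * (f1 * b3 - b1 * f3) + u3 * (f1 * b2 - b1 * f2) = 1) := by
    refine ⟨_, _, _, _, _, _, _, _, _, ?_,
      core_rows (Real.sqrt κ) (Real.sqrt (κ + r ^ 2)) (Real.sqrt (κ - a ^ 2 * Real.cos ϑ ^ 2))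
        (Real.sqrt (Sigk a r ϑ)) (Real.sqrt (vrhok M a E Φ κ r ϑ))
        (Real.sqrt (rhok M a E Φ κ r ϑ)) (Real.sqrt (Thk a E Φ κ ϑ))
        (Real.sqrt (Rk M a E Φ κ r)) r (a * Real.cos ϑ) (Dk a E Φ ϑ) (Pk a E Φ r) (Delk M a r)
        hkp.ne' hzp.ne' hyp.ne' hSp.ne' hvp.ne' hhp.ne' ?_ ?_ ?_ ?_ ?_ ?_ ?_
        _ _ _ _ _ _ _ _ _ rfl rfl rfl rfl rfl rfl rfl rfl rfl⟩
    · unfold LambdaRot c1k c2k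
      rw [n1, n2, n3, n4, hw, hpi]
      generalize Real.sqrt (Rk M a E Φ κ r) = R at *
      generalize Real.sqrt (Thk a E Φ κ ϑ) = T at *
      rw [← SS, ← vv, ← zz]
      simp only [Real.sqrt_sq hSp.le, Real.sqrt_sq hvp.le, Real.sqrt_sq hzp.le]
      generalize Real.sqrt (Sigk a r ϑ) = S at *
      generalize Real.sqrt (vrhok M a E Φ κ r ϑ) = v at *
      generalize Real.sqrt (rhok M a E Φ κ r ϑ) = h at *
      generalize Real.sqrt (κ + r ^ 2) = z at *
      generalize Real.sqrt (κ - a ^ 2 * Real.cos ϑ ^ 2) = y at *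
      generalize Real.sqrt κ = k at *
      have := hkp.ne'
      have := hzp.ne'
      have := hyp.ne'
      have := hSp.ne'
      have := hvp.ne'
      have := hhp.ne'
      ext i j
      fin_cases i <;> fin_cases j <;> simp <;> field_simp <;> ring
    · rw [kk, yy]; ring
    · rw [zz, yy]; ring
    · rw [SS, Sigk]; ring
    · rw [TT, yy, Thk]
    · rw [RR, yy, Rk]; ring
    · rw [vv, yy, vrhok]
    · rw [hh, yy, rhok, Thk]
  obtain ⟨u1, u2, u3, f1, f2, f3, b1, b2, b3, hL, h11, h22, h33, h12, h13, h23, hd⟩ := hL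
  have hcs := Real.sin_sq_add_cos_sq χ
  rw [hL]
  generalize Real.sin χ = s at *
  generalize Real.cos χ = co at *
  constructor
  · rw [mul_eq_one_comm]
    ext i j
    fin_cases i <;> fin_cases j <;>
      simp [Matrix.mul_apply, Fin.sum_univ_three]
    · linear_combination h11 + (f1 ^ 2 + b1 ^ 2) * hcs
    · linear_combination h12 + (f1 * f2 + b1 * b2) * hcs
    · linear_combination h13 + (f1 * f3 + b1 * b3) * hcs
    · linear_combination h12 + (f1 * f2 + b1 * b2) * hcs
    · linear_combination h22 + (f2 ^ 2 + b2 ^ 2) * hcs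
    · linear_combination h23 + (f2 * f3 + b2 * b3) * hcs
    · linear_combination h13 + (f1 * f3 + b1 * b3) * hcs
    · linear_combination h23 + (f2 * f3 + b2 * b3) * hcs
    · linear_combination h33 + (f3 ^ 2 + b3 ^ 2) * hcs
  · rw [Matrix.det_fin_three]
    simp
    linear_combination hd + (u1 * (f2 * b3 - b2 * f3) - u2 * (f1 * b3 - b1 * f3)
      + u3 * (f1 * b2 - b1 * f2)) * hcs
end
end

section
/- Let M > a ≥ 0, E, Φ, κ ∈ ℝ, and let r, ϑ satisfy sin ϑ ≠ 0, Δ > 0, Σ > 0, R ≥ 0, Θ ≥ 0, ρ > 0 and ϱ > 0. Define the 4-tuples of frame components U := Σ^{−1/2}(𝒫/√Δ, √R/√Δ, 𝒟, √Θ), X := ρ^{−1/2}(−√Δ√Θ, 0, 0, −𝒫), Y := (ρϱ)^{−1/2}(√Δ·𝒫𝒟, 0, ρ, Δ𝒟√Θ), Z := (ΔΣϱ)^{−1/2}(−𝒫√R, −ϱ, −𝒟√Δ√R, −√Δ√Θ√R). Then {X, Y, Z} is an orthonormal basis of the η-orthogonal complement of U: ⟨X,X⟩_η = ⟨Y,Y⟩_η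 = ⟨Z,Z⟩_η = −1, ⟨X,Y⟩_η = ⟨X,Z⟩_η = ⟨Y,Z⟩_η = 0, and ⟨U,X⟩_η = ⟨U,Y⟩_η = ⟨U,Z⟩_η = 0 (with ⟨U,U⟩_η = 1). -/
noncomputable section

/-- Frame components of the reference vector X. -/
def Xframe (M a E Φ κ r ϑ : ℝ) : Fin 4 → ℝ :=
  (1 / Real.sqrt (rhok M a E Φ κ r ϑ)) •
    ![-(Real.sqrt (Delk M a r) * Real.sqrt (Thk a E Φ κ ϑ)), 0, 0,
      -Pk a E Φ r]

/-- Frame components of the reference vector Y. -/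
def Yframe (M a E Φ κ r ϑ : ℝ) : Fin 4 → ℝ :=
  (1 / Real.sqrt (rhok M a E Φ κ r ϑ * vrhok M a E Φ κ r ϑ)) •
    ![Real.sqrt (Delk M a r) * Pk a E Φ r * Dk a E Φ ϑ, 0,
      rhok M a E Φ κ r ϑ,
      Delk M a r * Dk a E Φ ϑ * Real.sqrt (Thk a E Φ κ ϑ)]

/-- Frame components of the reference vector Z. -/
def Zframe (M a E Φ κ r ϑ : ℝ) : Fin 4 → ℝ :=
  (1 / Real.sqrt (Delk M a r * Sigk a r ϑ * vrhok M a E Φ κ r ϑ)) •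
    ![-(Pk a E Φ r * Real.sqrt (Rk M a E Φ κ r)),
      -vrhok M a E Φ κ r ϑ,
      -(Dk a E Φ ϑ * Real.sqrt (Delk M a r) * Real.sqrt (Rk M a E Φ κ r)),
      -(Real.sqrt (Delk M a r) * Real.sqrt (Thk a E Φ κ ϑ) *
          Real.sqrt (Rk M a E Φ κ r))]

/-- {X, Y, Z} is an orthonormal basis of the η-orthogonal complement of the
4-velocity U. -/
theorem kerr_reference_frame_orthonormal
    (M a E Φ κ r ϑ : ℝ) (ha : 0 ≤ a) (haM : a < M)
    (hsin : Real.sin ϑ ≠ 0) (hΔ : 0 < Delk M a r) (hSig : 0 < Sigk a r ϑ)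
    (hR : 0 ≤ Rk M a E Φ κ r) (hΘ : 0 ≤ Thk a E Φ κ ϑ)
    (hρ : 0 < rhok M a E Φ κ r ϑ) (hϱ : 0 < vrhok M a E Φ κ r ϑ) :
    minkInner (Xframe M a E Φ κ r ϑ) (Xframe M a E Φ κ r ϑ) = -1 ∧
    minkInner (Yframe M a E Φ κ r ϑ) (Yframe M a E Φ κ r ϑ) = -1 ∧
    minkInner (Zframe M a E Φ κ r ϑ) (Zframe M a E Φ κ r ϑ) = -1 ∧
    minkInner (Xframe M a E Φ κ r ϑ) (Yframe M a E Φ κ r ϑ) = 0 ∧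
    minkInner (Xframe M a E Φ κ r ϑ) (Zframe M a E Φ κ r ϑ) = 0 ∧
    minkInner (Yframe M a E Φ κ r ϑ) (Zframe M a E Φ κ r ϑ) = 0 ∧
    minkInner (Uframe M a E Φ κ r ϑ) (Xframe M a E Φ κ r ϑ) = 0 ∧
    minkInner (Uframe M a E Φ κ r ϑ) (Yframe M a E Φ κ r ϑ) = 0 ∧
    minkInner (Uframe M a E Φ κ r ϑ) (Zframe M a E Φ κ r ϑ) = 0 ∧
    minkInner (Uframe M a E Φ κ r ϑ) (Uframe M a E Φ κ r ϑ) = 1 := by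
  have hϱ' : vrhok M a E Φ κ r ϑ =
      Pk a E Φ r ^ 2 - Delk M a r * (Thk a E Φ κ ϑ + Dk a E Φ ϑ ^ 2) := by
    unfold vrhok Thk; ring
  have hρ' : rhok M a E Φ κ r ϑ = Pk a E Φ r ^ 2 - Delk M a r * Thk a E Φ κ ϑ := rfl
  have hR' : Rk M a E Φ κ r = Pk a E Φ r ^ 2 -
      Delk M a r * (Thk a E Φ κ ϑ + Dk a E Φ ϑ ^ 2 + Sigk a r ϑ) := by
    unfold Rk Thk Sigk; ring
  simp only [minkInner, Uframe, Xframe, Yframe, Zframe, Pi.smul_apply, smul_eq_mul,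
    Matrix.cons_val]
  have hρϱ := mul_pos hρ hϱ
  have hw := mul_pos (mul_pos hΔ hSig) hϱ
  have d2 := Real.sq_sqrt hΔ.le
  have s2 := Real.sq_sqrt hSig.le
  have q2 := Real.sq_sqrt hR
  have t2 := Real.sq_sqrt hΘ
  have x2 := Real.sq_sqrt hρ.le
  have y2 := Real.sq_sqrt hρϱ.le
  have z2 := Real.sq_sqrt hw.le
  have d0 := Real.sqrt_pos.2 hΔ
  have s0 := Real.sqrt_pos.2 hSig
  have x0 := Real.sqrt_pos.2 hρ
  have y0 := Real.sqrt_pos.2 hρϱ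
  have z0 := Real.sqrt_pos.2 hw
  generalize √(rhok M a E Φ κ r ϑ * vrhok M a E Φ κ r ϑ) = y at *
  generalize √(Delk M a r * Sigk a r ϑ * vrhok M a E Φ κ r ϑ) = z at *
  generalize √(rhok M a E Φ κ r ϑ) = x at *
  generalize √(Delk M a r) = d at *
  generalize √(Sigk a r ϑ) = s at *
  generalize √(Rk M a E Φ κ r) = q at *
  generalize √(Thk a E Φ κ ϑ) = t at *
  generalize rhok M a E Φ κ r ϑ = ρ at *
  generalize vrhok M a E Φ κ r ϑ = v at *
  generalize Delk M a r = Δ at *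
  generalize Sigk a r ϑ = S at *
  generalize Rk M a E Φ κ r = R at *
  generalize Thk a E Φ κ ϑ = T at *
  generalize Pk a E Φ r = P at *
  generalize Dk a E Φ ϑ = D at *
  clear hsin ha haM
  subst d2 s2 t2
  refine ⟨?_, ?_, ?_, ?_, ?_, ?_, ?_, ?_, ?_, ?_⟩
  · field_simp
    linear_combination hρ' + x2
  · field_simp
    rw [y2, hϱ', hρ']; ring
  · field_simp
    rw [z2, q2, hR', hϱ']; ring
  · ring
  · ring
  · rw [hρ']; ring
  · field_simp; ring
  · rw [hρ']; field_simp; ring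
  · rw [hϱ']; field_simp; ring
  · field_simp
    rw [q2, hR']; ring
end
end

section
/- Let a < b and let α, β : (a,b) → ℝ³ be three times continuously differentiable curves with ‖α(s)‖ = ‖β(s)‖ = 1 and ‖α'(s)‖ = ‖β'(s)‖ = 1 for all s (unit-speed curves on the unit sphere), and define their spherical curvatures k_g[α](s) := α'(s) · (α''(s) × α(s)) and k_g[β](s) := β'(s) · (β''(s) × β(s)). Then there exists a rotation Λ ∈ SO(3) with α(s) = Λ β(s) for all s ∈ (a,b) if and only if k_g[α](s) = k_g[β](s) for all s ∈ (a,b). -/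
open Matrix

noncomputable section

/-- Euclidean norm on ℝ³. -/
def norm3 (v : Fin 3 → ℝ) : ℝ := Real.sqrt (v ⬝ᵥ v)

/-- Spherical curvature k_g[α](s) := α'·(α''×α) of a unit-speed curve α on the
unit sphere. -/
def sphericalCurvUnit (α : ℝ → Fin 3 → ℝ) (s : ℝ) : ℝ :=
  deriv α s ⬝ᵥ crossProduct (deriv (deriv α) s) (α s)

def Fr (u v : Fin 3 → ℝ) : Matrix (Fin 3) (Fin 3) ℝ := Matrix.of ![u, v, crossProduct u v]

lemma Fr_mul_transpose (u v : Fin 3 → ℝ) (hu : u ⬝ᵥ u = 1) (hv : v ⬝ᵥ v = 1)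
    (huv : u ⬝ᵥ v = 0) : Fr u v * (Fr u v)ᵀ = 1 := by
  simp only [dotProduct, Fin.sum_univ_three] at hu hv huv
  ext i j
  fin_cases i <;> fin_cases j <;>
    simp [Fr, Matrix.mul_apply, Fin.sum_univ_three, cross_apply] <;> grind

lemma Fr_det (u v : Fin 3 → ℝ) (hu : u ⬝ᵥ u = 1) (hv : v ⬝ᵥ v = 1)
    (huv : u ⬝ᵥ v = 0) : (Fr u v).det = 1 := by
  simp only [dotProduct, Fin.sum_univ_three] at hu hv huv
  simp [Fr, Matrix.det_fin_three, cross_apply]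
  grind

lemma frame_expand (u v w : Fin 3 → ℝ) (hu : u ⬝ᵥ u = 1) (hv : v ⬝ᵥ v = 1)
    (huv : u ⬝ᵥ v = 0) (i : Fin 3) :
    w i = (w ⬝ᵥ u) * u i + (w ⬝ᵥ v) * v i + (w ⬝ᵥ crossProduct u v) * crossProduct u v i := by
  have h := mul_eq_one_comm.mp (Fr_mul_transpose u v hu hv huv)
  have h2 : ((Fr u v)ᵀ * Fr u v).mulVec w i = w i := by rw [h, Matrix.one_mulVec]
  rw [← h2, ← Matrix.mulVec_mulVec]
  simp [Fr, Matrix.mulVec, dotProduct, Fin.sum_univ_three]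
  ring

lemma norm3_one {v : Fin 3 → ℝ} (h : norm3 v = 1) : v ⬝ᵥ v = 1 := by
  simpa [norm3] using h

lemma smooth_facts {a b : ℝ} {α : ℝ → Fin 3 → ℝ} (hα : ContDiffOn ℝ 3 α (Set.Ioo a b))
    {s : ℝ} (hs : s ∈ Set.Ioo a b) :
    HasDerivAt α (deriv α s) s ∧ HasDerivAt (deriv α) (deriv (deriv α) s) s := by
  have h1 : ContDiffAt ℝ 3 α s := hα.contDiffAt (isOpen_Ioo.mem_nhds hs)
  have h2 : ContDiffOn ℝ 2 (deriv α) (Set.Ioo a b) :=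
    hα.deriv_of_isOpen isOpen_Ioo (by norm_num)
  have h3 := h2.contDiffAt (isOpen_Ioo.mem_nhds hs)
  exact ⟨(h1.differentiableAt (by norm_num)).hasDerivAt,
    (h3.differentiableAt (by norm_num)).hasDerivAt⟩

lemma hasDerivAt_dot {f g : ℝ → Fin 3 → ℝ} {f' g' : Fin 3 → ℝ} {s : ℝ}
    (hf : HasDerivAt f f' s) (hg : HasDerivAt g g' s) :
    HasDerivAt (fun t => f t ⬝ᵥ g t) (f' ⬝ᵥ g s + f s ⬝ᵥ g') s := by
  rw [hasDerivAt_pi] at hf hg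
  simp only [dotProduct, Fin.sum_univ_three]
  refine HasDerivAt.congr_deriv ((((hf 0).mul (hg 0)).add ((hf 1).mul (hg 1))).add ((hf 2).mul (hg 2))) ?_
  ring

lemma hasDerivAt_cross {f g : ℝ → Fin 3 → ℝ} {f' g' : Fin 3 → ℝ} {s : ℝ}
    (hf : HasDerivAt f f' s) (hg : HasDerivAt g g' s) :
    HasDerivAt (fun t => crossProduct (f t) (g t))
      (crossProduct f' (g s) + crossProduct (f s) g') s := by
  rw [hasDerivAt_pi] at hf hg ⊢
  intro i
  fin_cases i
  · simp [cross_apply]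
    refine HasDerivAt.congr_deriv (((hf 1).mul (hg 2)).sub ((hf 2).mul (hg 1))) ?_
    ring
  · simp [cross_apply]
    refine HasDerivAt.congr_deriv (((hf 2).mul (hg 0)).sub ((hf 0).mul (hg 2))) ?_
    ring
  · simp [cross_apply]
    refine HasDerivAt.congr_deriv (((hf 0).mul (hg 1)).sub ((hf 1).mul (hg 0))) ?_
    ring

lemma deriv_dot_const {a b c : ℝ} {f g : ℝ → Fin 3 → ℝ} {f' g' : Fin 3 → ℝ} {s : ℝ}
    (hs : s ∈ Set.Ioo a b) (hf : HasDerivAt f f' s) (hg : HasDerivAt g g' s)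
    (h : ∀ t ∈ Set.Ioo a b, f t ⬝ᵥ g t = c) : f' ⬝ᵥ g s + f s ⬝ᵥ g' = 0 := by
  have h1 := hasDerivAt_dot hf hg
  have h2 : HasDerivAt (fun t => f t ⬝ᵥ g t) 0 s :=
    (hasDerivAt_const s c).congr_of_eventuallyEq
      (Filter.eventually_of_mem (isOpen_Ioo.mem_nhds hs) h)
  exact h1.unique h2

lemma darboux {a b : ℝ} {α : ℝ → Fin 3 → ℝ} (hα : ContDiffOn ℝ 3 α (Set.Ioo a b))
    (hn : ∀ s ∈ Set.Ioo a b, norm3 (α s) = 1)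
    (hsp : ∀ s ∈ Set.Ioo a b, norm3 (deriv α s) = 1) {s : ℝ} (hs : s ∈ Set.Ioo a b) :
    α s ⬝ᵥ α s = 1 ∧ deriv α s ⬝ᵥ deriv α s = 1 ∧ α s ⬝ᵥ deriv α s = 0 ∧
    ∀ i, HasDerivAt (fun t => α t i) (deriv α s i) s ∧
      HasDerivAt (fun t => deriv α t i)
        (-α s i + sphericalCurvUnit α s * crossProduct (α s) (deriv α s) i) s ∧
      HasDerivAt (fun t => crossProduct (α t) (deriv α t) i)
        (-sphericalCurvUnit α s * deriv α s i) s := by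
  have hu : ∀ t ∈ Set.Ioo a b, α t ⬝ᵥ α t = 1 := fun t ht => norm3_one (hn t ht)
  have hv : ∀ t ∈ Set.Ioo a b, deriv α t ⬝ᵥ deriv α t = 1 := fun t ht => norm3_one (hsp t ht)
  have huv : ∀ t ∈ Set.Ioo a b, α t ⬝ᵥ deriv α t = 0 := by
    intro t ht
    obtain ⟨h1, -⟩ := smooth_facts hα ht
    have := deriv_dot_const ht h1 h1 hu
    rw [dotProduct_comm (deriv α t)] at this
    linarith
  obtain ⟨h1, h2⟩ := smooth_facts hα hs
  have e1 := deriv_dot_const hs h2 h2 hv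
  have e2 := deriv_dot_const hs h1 h2 huv
  rw [hv s hs, dotProduct_comm] at e2
  rw [dotProduct_comm (deriv α s)] at e1
  have e3 : deriv (deriv α) s ⬝ᵥ crossProduct (α s) (deriv α s) = sphericalCurvUnit α s := by
    simp [sphericalCurvUnit, cross_apply, dotProduct, Fin.sum_univ_three]
    ring
  have key : ∀ i, deriv (deriv α) s i =
      -α s i + sphericalCurvUnit α s * crossProduct (α s) (deriv α s) i := by
    intro i
    rw [frame_expand (α s) (deriv α s) (deriv (deriv α) s) (hu s hs) (hv s hs) (huv s hs) i, e3,
      show deriv (deriv α) s ⬝ᵥ α s = -1 by linarith,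
      show deriv (deriv α) s ⬝ᵥ deriv α s = 0 by linarith]
    ring
  refine ⟨hu s hs, hv s hs, huv s hs, fun i => ⟨hasDerivAt_pi.mp h1 i, ?_, ?_⟩⟩
  · rw [← key]; exact hasDerivAt_pi.mp h2 i
  · refine HasDerivAt.congr_deriv (hasDerivAt_pi.mp (hasDerivAt_cross h1 h2) i) ?_
    have k0 := key 0
    have k1 := key 1
    have k2 := key 2
    have h3 := hu s hs
    have h4 := huv s hs
    simp only [dotProduct, Fin.sum_univ_three] at h3 h4
    generalize sphericalCurvUnit α s = k at *
    generalize deriv (deriv α) s = w at *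
    generalize deriv α s = v at *
    generalize α s = u at *
    simp [cross_apply] at k0 k1 k2
    fin_cases i <;> simp [cross_apply, k0, k1, k2]
    · linear_combination (-k * v 0) * h3 + k * u 0 * h4
    · linear_combination (-k * v 1) * h3 + k * u 1 * h4
    · linear_combination (-k * v 2) * h3 + k * u 2 * h4

lemma deriv_rot {a b : ℝ} {f g : ℝ → Fin 3 → ℝ} {Λ : Matrix (Fin 3) (Fin 3) ℝ}
    (h : ∀ s ∈ Set.Ioo a b, f s = Λ.mulVec (g s)) {s : ℝ} (hs : s ∈ Set.Ioo a b)
    {g' : Fin 3 → ℝ} (hg : HasDerivAt g g' s) : deriv f s = Λ.mulVec g' := by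
  have h2 : HasDerivAt (fun t => Λ.mulVec (g t)) (Λ.mulVec g') s :=
    ((Matrix.mulVecLin Λ).toContinuousLinearMap.hasFDerivAt.comp_hasDerivAt s hg)
  exact (h2.congr_of_eventuallyEq
    (Filter.eventually_of_mem (isOpen_Ioo.mem_nhds hs) h)).deriv

/-- Two unit-speed curves on the unit sphere are related by a rotation in
SO(3) if and only if they have the same spherical curvature. -/
theorem spherical_curves_congruent_iff
    (a b : ℝ) (hab : a < b)
    (α β : ℝ → Fin 3 → ℝ)
    (hα : ContDiffOn ℝ 3 α (Set.Ioo a b))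
    (hβ : ContDiffOn ℝ 3 β (Set.Ioo a b))
    (hαnorm : ∀ s ∈ Set.Ioo a b, norm3 (α s) = 1)
    (hβnorm : ∀ s ∈ Set.Ioo a b, norm3 (β s) = 1)
    (hαspeed : ∀ s ∈ Set.Ioo a b, norm3 (deriv α s) = 1)
    (hβspeed : ∀ s ∈ Set.Ioo a b, norm3 (deriv β s) = 1) :
    (∃ Λ : Matrix (Fin 3) (Fin 3) ℝ, Λ.transpose * Λ = 1 ∧ Λ.det = 1 ∧
        ∀ s ∈ Set.Ioo a b, α s = Λ.mulVec (β s))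
      ↔ ∀ s ∈ Set.Ioo a b, sphericalCurvUnit α s = sphericalCurvUnit β s := by
  constructor
  · rintro ⟨Λ, -, hdet, h⟩ s hs
    have hd : ∀ t ∈ Set.Ioo a b, deriv α t = Λ.mulVec (deriv β t) := fun t ht =>
      deriv_rot h ht (smooth_facts hβ ht).1
    have hdd := deriv_rot hd hs (smooth_facts hβ hs).2
    rw [sphericalCurvUnit, sphericalCurvUnit, hdd, hd s hs, h s hs]
    rw [← one_mul (deriv β s ⬝ᵥ _), ← hdet, Matrix.det_fin_three]
    simp [cross_apply, dotProduct, Fin.sum_univ_three, Matrix.mulVec]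
    ring
  · intro hk
    let M : ℝ → Fin 3 → Fin 3 → ℝ := fun s i j =>
      α s i * β s j + deriv α s i * deriv β s j +
        crossProduct (α s) (deriv α s) i * crossProduct (β s) (deriv β s) j
    have hM : ∀ s, ((Fr (α s) (deriv α s))ᵀ * Fr (β s) (deriv β s)) = Matrix.of (M s) := by
      intro s
      ext i j
      simp [Fr, Matrix.mul_apply, Fin.sum_univ_three, M]
    have hder : ∀ s ∈ Set.Ioo a b, ∀ i j, HasDerivAt (fun t => M t i j) 0 s := by
      intro s hs i j
      obtain ⟨-, -, -, hA⟩ := darboux hα hαnorm hαspeed hs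
      obtain ⟨-, -, -, hB⟩ := darboux hβ hβnorm hβspeed hs
      obtain ⟨a1, a2, a3⟩ := hA i
      obtain ⟨b1, b2, b3⟩ := hB j
      refine HasDerivAt.congr_deriv (((a1.mul b1).add (a2.mul b2)).add (a3.mul b3)) ?_
      rw [hk s hs]
      ring
    obtain ⟨c, hc⟩ : (Set.Ioo a b).Nonempty := Set.nonempty_Ioo.mpr hab
    have hconst : ∀ s ∈ Set.Ioo a b, M s = M c := by
      intro s hs
      ext i j
      exact isOpen_Ioo.is_const_of_deriv_eq_zero isPreconnected_Ioo
        (fun t ht => (hder t ht i j).differentiableAt.differentiableWithinAt)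
        (fun t ht => (hder t ht i j).deriv) hs hc
    obtain ⟨a1, a2, a3, -⟩ := darboux hα hαnorm hαspeed hc
    obtain ⟨b1, b2, b3, -⟩ := darboux hβ hβnorm hβspeed hc
    refine ⟨(Fr (α c) (deriv α c))ᵀ * Fr (β c) (deriv β c), ?_, ?_, ?_⟩
    · rw [Matrix.transpose_mul, Matrix.transpose_transpose, Matrix.mul_assoc,
        ← Matrix.mul_assoc (Fr (α c) _), Fr_mul_transpose _ _ a1 a2 a3, Matrix.one_mul]
      exact mul_eq_one_comm.mp (Fr_mul_transpose _ _ b1 b2 b3)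
    · rw [Matrix.det_mul, Matrix.det_transpose, Fr_det _ _ a1 a2 a3, Fr_det _ _ b1 b2 b3, one_mul]
    · intro s hs
      obtain ⟨b1, b2, b3, -⟩ := darboux hβ hβnorm hβspeed hs
      rw [hM, ← hconst s hs]
      have e1 := b1
      have e2 := b3
      have e3 : crossProduct (β s) (deriv β s) ⬝ᵥ β s = 0 := by
        rw [dotProduct_comm]; exact dot_self_cross _ _
      simp only [dotProduct, Fin.sum_univ_three] at e1 e2 e3
      ext i
      simp only [M, Matrix.mulVec, dotProduct, Fin.sum_univ_three, Matrix.of_apply]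
      linear_combination (-α s i) * e1 - deriv α s i * e2 -
        crossProduct (α s) (deriv α s) i * e3
end
end
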